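/- arXiv:1403.7818 — 4 statements merged into one kernel-verified Lean document; each statement's English description precedes it below -/
import Mathlib

section
/- Let {π^i_j : A_i → A_{ij} = A_{ji}}_{i,j∈J, i≠j} be a finite family of surjective algebra homomorphisms that is distributive (for each i the kernels ker π^i_j, j ≠ i, generate a distributive lattice of ideals) and satisfies the cocycle condition. Suppose there exist two families of linear splittings α^i_j, β^i_j : A_{ij} → A_i of the π^i_j (π^i_j ∘ α^i_j = id = π^i_j ∘ β^i_j) such that every β^i_j is unital and, for all distinct i,j,k ∈ J, α^i_j(π^i_j(ker π^i_k)) ⊆ ker π^i_k. Fix i ∈ J, let |J| = n+1, and let κ : {0,…,n} → J be a bijection with κ_0 = i. For a ∈ A_i define α_i(a) := (a_j)_{j∈J} by a_i := a and a_{κ_{m+1}} := a^m_{κ_{m+1}} for 0 ≤ m < n, where a^0_{κ_{m+1}} := β^{κ_{m+1}}_{κ_0}(π^{κ_0}_{κ_{m+1}}(a_{κ_0})) and a^{k+1}_{κ_{m+1}} := a^k_{κ_{m+1}} − α^{κ_{m+1}}_{κ_{k+1}}(π^{κ_{m+1}}_{κ_{k+1}}(a^k_{κ_{m+1}}) − π^{κ_{k+1}}_{κ_{m+1}}(a_{κ_{k+1}}))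 for 0 ≤ k < m. Then α_i is a well-defined unital linear map A_i → A^π into the multi-pullback algebra A^π (i.e., α_i(a) satisfies all compatibility conditions π^j_l(a_j) = π^l_j(a_l)), and π_i ∘ α_i = id_{A_i}, where π_i : A^π → A_i is the canonical projection. -/
/-!
The components `a_{κ_0}, a_{κ_1}, …` are shown to be pairwise compatible by induction: given that
`a_{κ_0}, …, a_{κ_m}` are compatible, put `j = κ_{m+1}` and show by an inner induction on `k ≤ m`
that `a^k_j` is compatible with `a_{κ_0}, …, a_{κ_k}` (`innerSeq_compat`).  For `k = 0` this is the
splitting property of `β`.  For the step put `l = κ_{k+1}` and let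
`d = π^j_l(a^k_j) - π^l_j(a_l)` be the defect.  Subtracting `α^j_l(d)` makes the new element
compatible with `a_l`.  It does not disturb the compatibility with an earlier `a_s`, since the
cocycle condition for `j, s, l`, applied to the compatible pairs `(a^k_j, a_s)` and `(a_s, a_l)`,
gives `d ∈ π^j_l(ker π^j_s)`, and `α^j_l` maps this subspace into `ker π^j_s`.

Linearity and unitality pass through the recursion step by step.
-/

section MultiPullback

variable {K : Type*} [Field K] {J : Type*}
variable {A : J → Type*} [∀ i, Ring (A i)] [∀ i, Algebra K (A i)]
variable {B : Sym2 J → Type*} [∀ p, Ring (B p)] [∀ p, Algebra K (B p)]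

/-- The gluing map `π^i_j : A_i → A_{ij}` (the target `A_{ij} = A_{ji}` depends only on the
unordered pair `{i,j}`). -/
def pL (π : ∀ (i : J) (p : Sym2 J), i ∈ p → (A i →ₐ[K] B p)) (i j : J) :
    A i →ₐ[K] B s(i, j) :=
  π i s(i, j) (Sym2.mem_mk_left i j)

/-- The gluing map `π^j_i : A_j → A_{ij}`. -/
def pR (π : ∀ (i : J) (p : Sym2 J), i ∈ p → (A i →ₐ[K] B p)) (i j : J) :
    A j →ₐ[K] B s(i, j) :=
  π j s(i, j) (Sym2.mem_mk_right i j)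

/-- A linear splitting `A_{ij} → A_i` of `π^i_j`, extracted from a family indexed by
membership in unordered pairs. -/
def sL (αs : ∀ (i : J) (p : Sym2 J), i ∈ p → (B p →ₗ[K] A i)) (i j : J) :
    B s(i, j) →ₗ[K] A i :=
  αs i s(i, j) (Sym2.mem_mk_left i j)

/-- The multi-pullback algebra
`A^π = {(a_i) ∈ ∏ᵢ A_i | π^i_j(a_i) = π^j_i(a_j) for all i ≠ j}`. -/
def mpAlgebra (π : ∀ (i : J) (p : Sym2 J), i ∈ p → (A i →ₐ[K] B p)) :
    Subalgebra K (∀ i, A i) where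
  carrier := {a | ∀ i j : J, i ≠ j → pL π i j (a i) = pR π i j (a j)}
  mul_mem' := by
    intro a b ha hb i j hij
    have : pL π i j ((a * b) i) = pR π i j ((a * b) j) := by
      simp only [Pi.mul_apply, map_mul, ha i j hij, hb i j hij]
    exact this
  add_mem' := by
    intro a b ha hb i j hij
    have : pL π i j ((a + b) i) = pR π i j ((a + b) j) := by
      simp only [Pi.add_apply, map_add, ha i j hij, hb i j hij]
    exact this
  one_mem' := by
    intro i j hij
    have : pL π i j ((1 : ∀ i, A i) i) = pR π i j ((1 : ∀ i, A i) j) := by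
      simp only [Pi.one_apply, map_one]
    exact this
  zero_mem' := by
    intro i j hij
    have : pL π i j ((0 : ∀ i, A i) i) = pR π i j ((0 : ∀ i, A i) j) := by
      simp only [Pi.zero_apply, map_zero]
    exact this
  algebraMap_mem' := by
    intro r i j hij
    have : pL π i j (algebraMap K (∀ i, A i) r i) = pR π i j (algebraMap K (∀ i, A i) r j) := by
      simp only [Pi.algebraMap_apply, AlgHom.commutes]
    exact this

variable (π : ∀ (i : J) (p : Sym2 J), i ∈ p → (A i →ₐ[K] B p))
variable (αs βs : ∀ (i : J) (p : Sym2 J), i ∈ p → (B p →ₗ[K] A i))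
variable (κ : ℕ → J)

/-- The inner recursion of Theorem 3.2 (`main-split`): given the already constructed
components `prev k = a_{κ_k}`, this produces the sequence `a^0_{κ_{m₁}}, a^1_{κ_{m₁}}, …`, i.e.
`a^0_{κ_{m₁}} := β^{κ_{m₁}}_{κ_0}(π^{κ_0}_{κ_{m₁}}(a_{κ_0}))` and
`a^{k+1}_{κ_{m₁}} := a^k_{κ_{m₁}} −
  α^{κ_{m₁}}_{κ_{k+1}}(π^{κ_{m₁}}_{κ_{k+1}}(a^k_{κ_{m₁}}) − π^{κ_{k+1}}_{κ_{m₁}}(a_{κ_{k+1}}))`. -/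
noncomputable def innerSeq (prev : ∀ k : ℕ, A (κ k)) (m1 : ℕ) : ℕ → A (κ m1)
  | 0 => sL βs (κ m1) (κ 0) (pR π (κ m1) (κ 0) (prev 0))
  | k + 1 => innerSeq prev m1 k -
      sL αs (κ m1) (κ (k + 1))
        (pL π (κ m1) (κ (k + 1)) (innerSeq prev m1 k) -
          pR π (κ m1) (κ (k + 1)) (prev (k + 1)))

/-- Stage `t` of the construction: the components `a_{κ_0}, …, a_{κ_t}` have been constructed
(`junk value 0` beyond index `t`). -/
noncomputable def stages (a : A (κ 0)) : ℕ → ∀ k : ℕ, A (κ k)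
  | 0 => fun k => match k with
    | 0 => a
    | _ + 1 => 0
  | t + 1 => fun k =>
      if h : k = t + 1 then
        cast (congrArg (fun m => A (κ m)) h.symm)
          (innerSeq π αs βs κ (stages a t) (t + 1) t)
      else stages a t k

/-- The component `a_{κ_m}` of `α_i(a)`: `a_{κ_0} := a` and
`a_{κ_{m+1}} := a^m_{κ_{m+1}}`. -/
noncomputable def finalSeq (a : A (κ 0)) (m : ℕ) : A (κ m) :=
  stages π αs βs κ a m m

end MultiPullback

/-- The sublattice of subspaces generated by a family `f` under `⊔` and `⊓`. -/
inductive GenLat {K A : Type*} [Field K] [AddCommGroup A] [Module K A] {ι : Type*}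
    (f : ι → Submodule K A) : Submodule K A → Prop
  | base (i : ι) : GenLat f (f i)
  | sup {X Y : Submodule K A} : GenLat f X → GenLat f Y → GenLat f (X ⊔ Y)
  | inf {X Y : Submodule K A} : GenLat f X → GenLat f Y → GenLat f (X ⊓ Y)

section Construction

variable {K : Type*} [Field K] {J : Type*}
variable {A : J → Type*} [∀ i, Ring (A i)] [∀ i, Algebra K (A i)]
variable {B : Sym2 J → Type*} [∀ p, Ring (B p)] [∀ p, Algebra K (B p)]
variable (π : ∀ (i : J) (p : Sym2 J), i ∈ p → (A i →ₐ[K] B p))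
variable (αs βs : ∀ (i : J) (p : Sym2 J), i ∈ p → (B p →ₗ[K] A i))
variable (κ : ℕ → J)

/-- Compatibility of two components is symmetric; the two equations live in `B s(i, j)` and
`B s(j, i)`, which are equal but not definitionally so. -/
lemma compat_symm {i j : J} {x : A i} {y : A j} (h : pL π i j x = pR π i j y) :
    pL π j i y = pR π j i x := by
  have key : ∀ (p q : Sym2 J) (_ : p = q) (hi : i ∈ p) (hj : j ∈ p) (hi' : i ∈ q) (hj' : j ∈ q),
      π i p hi x = π j p hj y → π j q hj' y = π i q hi' x := by
    rintro p _ rfl hi hj hi' hj' e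
    exact e.symm
  exact key _ _ Sym2.eq_swap _ _ _ _ h

lemma innerSeq_congr {p q : ∀ k : ℕ, A (κ k)} (m1 k : ℕ) (h : ∀ l ≤ k, p l = q l) :
    innerSeq π αs βs κ p m1 k = innerSeq π αs βs κ q m1 k := by
  induction k with
  | zero => simp only [innerSeq, h 0 le_rfl]
  | succ k ih =>
    simp only [innerSeq, ih fun l hl => h l (by omega), h (k + 1) le_rfl]

lemma innerSeq_add (p q : ∀ k : ℕ, A (κ k)) (m1 k : ℕ) :
    innerSeq π αs βs κ (fun l => p l + q l) m1 k =
      innerSeq π αs βs κ p m1 k + innerSeq π αs βs κ q m1 k := by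
  induction k with
  | zero => simp only [innerSeq, map_add]
  | succ k ih =>
    simp only [innerSeq, ih, map_add, map_sub]
    abel

lemma innerSeq_smul (c : K) (p : ∀ k : ℕ, A (κ k)) (m1 k : ℕ) :
    innerSeq π αs βs κ (fun l => c • p l) m1 k = c • innerSeq π αs βs κ p m1 k := by
  induction k with
  | zero => simp only [innerSeq, map_smul]
  | succ k ih => simp only [innerSeq, ih, map_smul, map_sub, smul_sub]

lemma innerSeq_one (hβone : ∀ i j : J, i ≠ j → sL βs i j 1 = 1) (m1 k : ℕ) (h0 : κ m1 ≠ κ 0) :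
    innerSeq π αs βs κ (fun _ => 1) m1 k = 1 := by
  induction k with
  | zero => simp only [innerSeq, map_one, hβone _ _ h0]
  | succ k ih => simp only [innerSeq, ih, map_one, sub_self, map_zero, sub_zero]

lemma stages_eq_finalSeq (a : A (κ 0)) (t k : ℕ) (h : k ≤ t) :
    stages π αs βs κ a t k = finalSeq π αs βs κ a k := by
  induction t with
  | zero =>
    obtain rfl : k = 0 := by omega
    rfl
  | succ t ih =>
    rcases eq_or_ne k (t + 1) with rfl | hk
    · rfl
    · exact (dif_neg hk).trans (ih (by omega))

lemma finalSeq_zero (a : A (κ 0)) : finalSeq π αs βs κ a 0 = a := rfl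

/-- The recursion defining `a_{κ_{m+1}}`, free of the truncated stages. -/
lemma finalSeq_succ (a : A (κ 0)) (m : ℕ) :
    finalSeq π αs βs κ a (m + 1) =
      innerSeq π αs βs κ (finalSeq π αs βs κ a) (m + 1) m := by
  refine (dif_pos rfl).trans ?_
  exact innerSeq_congr π αs βs κ _ _ fun l hl => stages_eq_finalSeq π αs βs κ a m l hl

lemma finalSeq_add (a b : A (κ 0)) (m : ℕ) :
    finalSeq π αs βs κ (a + b) m = finalSeq π αs βs κ a m + finalSeq π αs βs κ b m := by
  induction m using Nat.strong_induction_on with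
  | _ m ih =>
    cases m with
    | zero => rfl
    | succ m =>
      simp only [finalSeq_succ]
      rw [← innerSeq_add]
      exact innerSeq_congr π αs βs κ _ _ fun l hl => ih l (by omega)

lemma finalSeq_smul (c : K) (a : A (κ 0)) (m : ℕ) :
    finalSeq π αs βs κ (c • a) m = c • finalSeq π αs βs κ a m := by
  induction m using Nat.strong_induction_on with
  | _ m ih =>
    cases m with
    | zero => rfl
    | succ m =>
      simp only [finalSeq_succ]
      rw [← innerSeq_smul]
      exact innerSeq_congr π αs βs κ _ _ fun l hl => ih l (by omega)

lemma finalSeq_one (hβone : ∀ i j : J, i ≠ j → sL βs i j 1 = 1) (n : ℕ)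
    (hinj : ∀ l ≤ n, ∀ m ≤ n, l ≠ m → κ l ≠ κ m) (m : ℕ) (hm : m ≤ n) :
    finalSeq π αs βs κ 1 m = 1 := by
  induction m using Nat.strong_induction_on with
  | _ m ih =>
    cases m with
    | zero => rfl
    | succ m =>
      rw [finalSeq_succ, ← innerSeq_one π αs βs κ hβone (m + 1) m
        (hinj _ hm _ (Nat.zero_le n) (by omega))]
      exact innerSeq_congr π αs βs κ _ _ fun l hl => ih l (by omega) (by omega)

/-- The inner induction: if the components `prev 0, …, prev m` are pairwise compatible, then the
`k`-th correction `a^k_{κ_{m+1}}` is compatible with `prev 0, …, prev k`. -/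
lemma innerSeq_compat
    (hcoc2 : ∀ i j k : J, i ≠ j → i ≠ k → j ≠ k → ∀ (ai : A i) (aj : A j) (ak : A k),
      pL π i j ai - pR π i j aj ∈
        Submodule.map (pL π i j).toLinearMap (LinearMap.ker (pL π i k).toLinearMap) →
      pL π j k aj - pR π j k ak ∈
        Submodule.map (pL π j k).toLinearMap (LinearMap.ker (pL π j i).toLinearMap) →
      pL π i k ai - pR π i k ak ∈
        Submodule.map (pL π i k).toLinearMap (LinearMap.ker (pL π i j).toLinearMap))
    (hαsplit : ∀ i j : J, i ≠ j → ∀ b : B s(i, j), pL π i j (sL αs i j b) = b)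
    (hβsplit : ∀ i j : J, i ≠ j → ∀ b : B s(i, j), pL π i j (sL βs i j b) = b)
    (hker : ∀ i j k : J, i ≠ j → i ≠ k → j ≠ k → ∀ x : A i,
      pL π i k x = 0 → pL π i k (sL αs i j (pL π i j x)) = 0)
    (n : ℕ) (hinj : ∀ l ≤ n, ∀ m ≤ n, l ≠ m → κ l ≠ κ m)
    (prev : ∀ k : ℕ, A (κ k)) (m : ℕ) (hm : m + 1 ≤ n)
    (hprev : ∀ s t : ℕ, s < t → t ≤ m →
      pL π (κ s) (κ t) (prev s) = pR π (κ s) (κ t) (prev t))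
    (k : ℕ) (hk : k ≤ m) (s : ℕ) (hs : s ≤ k) :
    pL π (κ (m + 1)) (κ s) (innerSeq π αs βs κ prev (m + 1) k) =
      pR π (κ (m + 1)) (κ s) (prev s) := by
  induction k generalizing s with
  | zero =>
    obtain rfl : s = 0 := by omega
    exact hβsplit _ _ (hinj _ hm _ (by omega) (by omega)) _
  | succ k ih =>
    have hjl : κ (m + 1) ≠ κ (k + 1) := hinj _ hm _ (by omega) (by omega)
    rcases eq_or_ne s (k + 1) with rfl | hsk
    · rw [innerSeq, map_sub, hαsplit _ _ hjl, sub_sub_cancel]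
    · have hjs : κ (m + 1) ≠ κ s := hinj _ hm _ (by omega) (by omega)
      have hsl : κ s ≠ κ (k + 1) := hinj _ (by omega) _ (by omega) hsk
      have hold := ih (by omega) s (by omega)
      -- the defect lies in `π^j_l(ker π^j_s)`, by the cocycle condition
      obtain ⟨y, hy, hyd⟩ := hcoc2 (κ (m + 1)) (κ s) (κ (k + 1)) hjs hjl hsl
        (innerSeq π αs βs κ prev (m + 1) k) (prev s) (prev (k + 1))
        (by rw [hold, sub_self]; exact Submodule.zero_mem _)
        (by rw [hprev s (k + 1) (by omega) hk, sub_self]; exact Submodule.zero_mem _)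
      have hyd' : pL π (κ (m + 1)) (κ (k + 1)) y = _ := hyd
      rw [innerSeq, map_sub, ← hyd', hker _ _ _ hjl hjs hsl.symm y hy, sub_zero, hold]

end Construction

set_option synthInstance.maxHeartbeats 1000000 in
set_option maxHeartbeats 1000000 in
/-- Let `{π^i_j : A_i → A_{ij}}` be a finite distributive family of surjective
algebra homomorphisms satisfying the cocycle condition (stated elementwise via equivalence
(2.3) of the paper).  Given linear splittings `α^i_j, β^i_j` of the `π^i_j` with all `β^i_j`
unital and `α^i_j(π^i_j(ker π^i_k)) ⊆ ker π^i_k`, and a bijection `κ : {0,…,n} → J`, the map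
`α_i(a) := (a_j)` defined by the recursive formula (with `i = κ_0`) is a well-defined unital
linear splitting of the canonical projection `π_i : A^π → A_i`. -/
theorem stmt_1 {K : Type*} [Field K] {J : Type*} [Fintype J] [DecidableEq J]
    {A : J → Type*} [∀ i, Ring (A i)] [∀ i, Algebra K (A i)]
    {B : Sym2 J → Type*} [∀ p, Ring (B p)] [∀ p, Algebra K (B p)]
    (π : ∀ (i : J) (p : Sym2 J), i ∈ p → (A i →ₐ[K] B p))
    -- the family is distributive
    (hsurj : ∀ i j : J, i ≠ j → Function.Surjective (pL π i j))
    (hdist : ∀ i : J, ∀ X Y Z : Submodule K (A i),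
      GenLat (fun j : {j : J // j ≠ i} => LinearMap.ker (pL π i j.1).toLinearMap) X →
      GenLat (fun j : {j : J // j ≠ i} => LinearMap.ker (pL π i j.1).toLinearMap) Y →
      GenLat (fun j : {j : J // j ≠ i} => LinearMap.ker (pL π i j.1).toLinearMap) Z →
      X ⊓ (Y ⊔ Z) = (X ⊓ Y) ⊔ (X ⊓ Z))
    -- cocycle condition, part 1
    (hcoc1 : ∀ i j k : J, i ≠ j → i ≠ k → j ≠ k →
      Submodule.map (pL π i j).toLinearMap (LinearMap.ker (pL π i k).toLinearMap) =
      Submodule.map (pR π i j).toLinearMap (LinearMap.ker (pL π j k).toLinearMap))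
    -- cocycle condition, part 2 (elementwise)
    (hcoc2 : ∀ i j k : J, i ≠ j → i ≠ k → j ≠ k → ∀ (ai : A i) (aj : A j) (ak : A k),
      pL π i j ai - pR π i j aj ∈
        Submodule.map (pL π i j).toLinearMap (LinearMap.ker (pL π i k).toLinearMap) →
      pL π j k aj - pR π j k ak ∈
        Submodule.map (pL π j k).toLinearMap (LinearMap.ker (pL π j i).toLinearMap) →
      pL π i k ai - pR π i k ak ∈
        Submodule.map (pL π i k).toLinearMap (LinearMap.ker (pL π i j).toLinearMap))
    -- the splittings `α^i_j` and `β^i_j` of the `π^i_j`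
    (αs βs : ∀ (i : J) (p : Sym2 J), i ∈ p → (B p →ₗ[K] A i))
    (hαsplit : ∀ i j : J, i ≠ j → ∀ b : B s(i, j), pL π i j (sL αs i j b) = b)
    (hβsplit : ∀ i j : J, i ≠ j → ∀ b : B s(i, j), pL π i j (sL βs i j b) = b)
    (hβone : ∀ i j : J, i ≠ j → sL βs i j 1 = 1)
    -- `α^i_j(π^i_j(ker π^i_k)) ⊆ ker π^i_k`
    (hker : ∀ i j k : J, i ≠ j → i ≠ k → j ≠ k → ∀ x : A i,
      pL π i k x = 0 → pL π i k (sL αs i j (pL π i j x)) = 0)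
    -- `|J| = n + 1` and `κ : {0,…,n} → J` is a bijection, with `i := κ_0`
    (n : ℕ) (κ : ℕ → J) (hκ : Function.Bijective (fun m : Fin (n + 1) => κ m.1)) :
    ∃ alph : A (κ 0) →ₗ[K] ↥(mpAlgebra π),
      (∀ (a : A (κ 0)) (m : ℕ), m ≤ n →
        ((alph a : ∀ j, A j) (κ m)) = finalSeq π αs βs κ a m) ∧
      alph 1 = 1 ∧
      (∀ a : A (κ 0), ((alph a : ∀ j, A j) (κ 0)) = a) := by
  have hinj : ∀ l ≤ n, ∀ m ≤ n, l ≠ m → κ l ≠ κ m := by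
    intro l hl m hm hlm h
    have := @hκ.1 ⟨l, by omega⟩ ⟨m, by omega⟩ h
    exact hlm (Fin.mk.inj this)
  have hcompat : ∀ (a : A (κ 0)) (t : ℕ), t ≤ n → ∀ s < t,
      pL π (κ s) (κ t) (finalSeq π αs βs κ a s) = pR π (κ s) (κ t) (finalSeq π αs βs κ a t) := by
    intro a t
    induction t using Nat.strong_induction_on with
    | _ t ih =>
      intro ht s hs
      cases t with
      | zero => omega
      | succ m =>
        apply compat_symm
        rw [finalSeq_succ]
        exact innerSeq_compat π αs βs κ hcoc2 hαsplit hβsplit hker n hinj _ m ht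
          (fun s t hst htm => ih t (by omega) (by omega) s hst) m le_rfl s (by omega)
  have hidx : ∀ j : J, ∃ m ≤ n, κ m = j := fun j => by
    obtain ⟨m, hm⟩ := hκ.2 j
    exact ⟨m.1, by omega, hm⟩
  -- transport the components from the indices `m ≤ n` to `J`
  have hcomp : ∀ j : J, ∃ f : A (κ 0) →ₗ[K] A j, ∀ (m : ℕ), m ≤ n → ∀ (h : κ m = j)
      (a : A (κ 0)), f a = h ▸ finalSeq π αs βs κ a m := by
    intro j
    obtain ⟨m, hm, rfl⟩ := hidx j
    refine ⟨⟨⟨fun a => finalSeq π αs βs κ a m, fun a b => finalSeq_add π αs βs κ a b m⟩,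
      fun c a => finalSeq_smul π αs βs κ c a m⟩, fun l hl h a => ?_⟩
    obtain rfl : l = m := by
      by_contra hne
      exact hinj l hl m hm hne h
    rfl
  choose f hf using hcomp
  have hfκ : ∀ (a : A (κ 0)) (m : ℕ), m ≤ n → f (κ m) a = finalSeq π αs βs κ a m :=
    fun a m hm => hf (κ m) m hm rfl a
  have hmem : ∀ a, LinearMap.pi f a ∈ Subalgebra.toSubmodule (mpAlgebra π) := by
    intro a i j hij
    obtain ⟨s, hs, rfl⟩ := hidx i
    obtain ⟨t, ht, rfl⟩ := hidx j
    simp only [LinearMap.pi_apply, hfκ a s hs, hfκ a t ht]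
    rcases lt_trichotomy s t with h | rfl | h
    · exact hcompat a t ht s h
    · exact absurd rfl hij
    · exact compat_symm π (hcompat a s hs t h)
  refine ⟨LinearMap.codRestrict _ (LinearMap.pi f) hmem, hfκ, ?_, fun a => hfκ a 0 (Nat.zero_le n)⟩
  apply Subtype.ext
  funext j
  obtain ⟨m, hm, rfl⟩ := hidx j
  exact (hfκ 1 m hm).trans (finalSeq_one π αs βs κ hβone n hinj m hm)
end

section
/- Let A be a vector space over a field and let {A_i}_{i∈I} be a finite family of vector subspaces of A generating a distributive lattice of subspaces (with + as join and ∩ as meet). For Γ ⊆ I write A_Γ := ⋂_{i∈Γ} A_i, with A_∅ := A. Then A has a linear basis 𝓑 = ⋃_{Γ∈2^I} 𝓑_Γ, where the subsets 𝓑_Γ ⊆ A_Γ are pairwise disjoint and satisfy, for every Γ ∈ 2^I, A_Γ = span(⋃_{Γ'⊇Γ} 𝓑_{Γ'}). -/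
section

variable {K A ι : Type*} [Field K] [AddCommGroup A] [Module K A] (f : ι → Submodule K A)

theorem genLat_biSup [DecidableEq ι] {s : Finset ι} (hs : s.Nonempty) :
    GenLat f (⨆ i ∈ s, f i) := by
  induction hs using Finset.Nonempty.cons_induction with
  | singleton a => simpa using GenLat.base a
  | cons a s ha hs ih =>
    rw [Finset.cons_eq_insert, Finset.iSup_insert]
    exact (GenLat.base a).sup ih

theorem genLat_biInf [DecidableEq ι] {s : Finset ι} (hs : s.Nonempty) :
    GenLat f (⨅ i ∈ s, f i) := by
  induction hs using Finset.Nonempty.cons_induction with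
  | singleton a => simpa using GenLat.base a
  | cons a s ha hs ih =>
    rw [Finset.cons_eq_insert, Finset.iInf_insert]
    exact (GenLat.base a).inf ih

/-- Finite distributivity for `A_Γ`. The case `Γ = ∅` is separate because `A_∅ = ⊤` need not belong
to the generated lattice. -/
theorem inf_biSup_le [DecidableEq ι]
    (hdist : ∀ X Y Z : Submodule K A, GenLat f X → GenLat f Y → GenLat f Z →
      X ⊓ (Y ⊔ Z) = (X ⊓ Y) ⊔ (X ⊓ Z)) (Γ s : Finset ι) :
    (⨅ i ∈ Γ, f i) ⊓ (⨆ i ∈ s, f i) ≤ ⨆ i ∈ s, (⨅ j ∈ Γ, f j) ⊓ f i := by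
  rcases Γ.eq_empty_or_nonempty with rfl | hΓ
  · simp
  induction s using Finset.induction_on with
  | empty => simp
  | insert a s ha ih =>
    rcases s.eq_empty_or_nonempty with rfl | hs
    · simp
    rw [Finset.iSup_insert, Finset.iSup_insert,
      hdist _ _ _ (genLat_biInf f hΓ) (GenLat.base a) (genLat_biSup f hs)]
    exact sup_le_sup le_rfl ih

/-- Subspaces `C Γ ≤ A_Γ` disjoint from `D_Γ` form an independent family. -/
theorem iSupIndep_of_disjoint [Fintype ι] [DecidableEq ι]
    (hdist : ∀ X Y Z : Submodule K A, GenLat f X → GenLat f Y → GenLat f Z →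
      X ⊓ (Y ⊔ Z) = (X ⊓ Y) ⊔ (X ⊓ Z))
    (C : Finset ι → Submodule K A) (hC : ∀ Γ, C Γ ≤ ⨅ i ∈ Γ, f i)
    (hD : ∀ Γ, Disjoint (⨆ i ∈ Γᶜ, (⨅ j ∈ Γ, f j) ⊓ f i) (C Γ)) : iSupIndep C := by
  rw [iSupIndep_iff_finsetSum_eq_zero_imp_eq_zero]
  classical
  intro s v hv hsum
  by_contra! hne
  obtain ⟨Γ₁, h₁s, h₁⟩ := hne
  obtain ⟨Γ, hΓ, hmin⟩ := (s.filter (v · ≠ 0)).exists_min_image Finset.card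
    ⟨Γ₁, Finset.mem_filter.2 ⟨h₁s, h₁⟩⟩
  obtain ⟨hΓs, hΓ0⟩ := Finset.mem_filter.1 hΓ
  have hrest : ∑ Γ' ∈ s.erase Γ, v Γ' ∈ ⨆ i ∈ Γᶜ, f i := by
    refine Submodule.sum_mem _ fun Γ' hΓ' => ?_
    obtain ⟨hne, hs'⟩ := Finset.mem_erase.1 hΓ'
    by_cases h0 : v Γ' = 0
    · rw [h0]; exact Submodule.zero_mem _
    have hns : ¬ Γ' ⊆ Γ := fun hsub =>
      hne (Finset.eq_of_subset_of_card_le hsub (hmin Γ' (Finset.mem_filter.2 ⟨hs', h0⟩)))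
    obtain ⟨i, hi', hi⟩ := Finset.not_subset.1 hns
    have hle : C Γ' ≤ ⨆ i ∈ Γᶜ, f i :=
      (hC Γ').trans ((iInf₂_le i hi').trans
        (le_iSup₂ (f := fun i _ => f i) i (Finset.mem_compl.2 hi)))
    exact hle (hv Γ' hs')
  have hmem : v Γ ∈ ⨆ i ∈ Γᶜ, f i := by
    rw [← Finset.add_sum_erase _ _ hΓs] at hsum
    rw [eq_neg_of_add_eq_zero_left hsum]
    exact Submodule.neg_mem _ hrest
  exact hΓ0 (Submodule.disjoint_def.1 (hD Γ) _
    (inf_biSup_le f hdist Γ Γᶜ ⟨hC Γ (hv Γ hΓs), hmem⟩) (hv Γ hΓs))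

/-- If `A_Γ = D_Γ + C_Γ` for all `Γ`, then `A_Γ` is the sum of the `C_Γ'` with `Γ ⊆ Γ'`. -/
theorem biInf_eq_biSup [Fintype ι] [DecidableEq ι]
    (C : Finset ι → Submodule K A)
    (hC : ∀ Γ, (⨆ i ∈ Γᶜ, (⨅ j ∈ Γ, f j) ⊓ f i) ⊔ C Γ = ⨅ i ∈ Γ, f i) (Γ : Finset ι) :
    ⨅ i ∈ Γ, f i = ⨆ Γ' ∈ {Γ' : Finset ι | Γ ⊆ Γ'}, C Γ' := by
  apply le_antisymm
  · induction Γ using WellFoundedGT.induction with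
    | ind Γ ih =>
    rw [← hC Γ]
    refine sup_le (iSup₂_le fun i hi => ?_)
      (le_iSup₂ (f := fun Γ' _ => C Γ') Γ (Finset.Subset.refl Γ))
    have hss := Finset.ssubset_insert (Finset.mem_compl.1 hi)
    rw [inf_comm, ← Finset.iInf_insert]
    exact (ih _ hss).trans
      (biSup_mono fun Γ' h => hss.subset.trans h)
  · refine iSup₂_le fun Γ' h => ?_
    exact (le_sup_right.trans (hC Γ').le).trans (biInf_mono fun i hi => h hi)

end

/-- Let `A` be a vector space and `{A_i}_{i∈I}` a finite family of subspaces
generating a distributive lattice of subspaces.  Writing `A_Γ := ⋂_{i∈Γ} A_i` (with `A_∅ = A`),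
`A` has a linear basis `𝓑 = ⋃_Γ 𝓑_Γ` with the `𝓑_Γ ⊆ A_Γ` pairwise disjoint and
`A_Γ = span(⋃_{Γ'⊇Γ} 𝓑_{Γ'})` for every `Γ`. -/
theorem stmt_4 {K A ι : Type*} [Field K] [AddCommGroup A] [Module K A]
    [Fintype ι] [DecidableEq ι]
    (f : ι → Submodule K A)
    (hdist : ∀ X Y Z : Submodule K A, GenLat f X → GenLat f Y → GenLat f Z →
      X ⊓ (Y ⊔ Z) = (X ⊓ Y) ⊔ (X ⊓ Z)) :
    ∃ B : Finset ι → Set A,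
      (∀ Γ : Finset ι, B Γ ⊆ ((⨅ i ∈ Γ, f i : Submodule K A) : Set A)) ∧
      (∀ Γ Γ' : Finset ι, Γ ≠ Γ' → Disjoint (B Γ) (B Γ')) ∧
      LinearIndependent K ((↑) : (⋃ Γ : Finset ι, B Γ) → A) ∧
      Submodule.span K (⋃ Γ : Finset ι, B Γ) = ⊤ ∧
      (∀ Γ : Finset ι, (⨅ i ∈ Γ, f i) =
        Submodule.span K (⋃ Γ' ∈ {Γ' : Finset ι | Γ ⊆ Γ'}, B Γ')) := by
  choose C hdisj hsup using fun Γ : Finset ι =>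
    IsModularLattice.exists_disjoint_and_sup_eq
    (iSup₂_le fun i _ => inf_le_left :
      (⨆ i ∈ Γᶜ, (⨅ j ∈ Γ, f j) ⊓ f i) ≤ ⨅ j ∈ Γ, f j)
  have hCle (Γ : Finset ι) : C Γ ≤ ⨅ i ∈ Γ, f i := le_sup_right.trans (hsup Γ).le
  have hind := iSupIndep_of_disjoint f hdist C hCle hdisj
  choose B hBC hspan hli using fun Γ : Finset ι => exists_linearIndependent K (C Γ : Set A)
  have hspan' (Γ : Finset ι) : Submodule.span K (B Γ) = C Γ := by
    rw [hspan, Submodule.span_eq]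
  have hmain (Γ : Finset ι) : (⨅ i ∈ Γ, f i) =
      Submodule.span K (⋃ Γ' ∈ {Γ' : Finset ι | Γ ⊆ Γ'}, B Γ') := by
    rw [biInf_eq_biSup f C hsup Γ]
    simp only [Submodule.span_iUnion, hspan']
  refine ⟨B, fun Γ => (hBC Γ).trans (hCle Γ), ?_, ?_, ?_, hmain⟩
  · intro Γ Γ' hne
    rw [Set.disjoint_left]
    intro x hx hx'
    -- A common vector lies in `C Γ ⊓ C Γ' = ⊥`, and a basis does not contain `0`.
    have h0 := Submodule.disjoint_def.1 (hind.pairwiseDisjoint hne) x (hBC Γ hx) (hBC Γ' hx')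
    exact (hli Γ).ne_zero ⟨x, hx⟩ h0
  · refine linearIndepOn_id_iUnion_finite hli fun Γ t _ hΓt => ?_
    simp only [hspan']
    exact hind.disjoint_biSup hΓt
  · simpa using (hmain ∅).symm
end

section
/- Let π : A → B be a surjective linear map of vector spaces, and let {A_i}_{i∈I} be a finite family of vector subspaces of A such that the family {A_i}_{i∈I} ∪ {ker π} generates a distributive lattice of vector subspaces. Then there exists a linear map α : B → A with π ∘ α = id_B and α(π(A_i)) ⊆ A_i for all i ∈ I. -/
/-- Every linear map of vector spaces has a generalized inverse. -/
lemma exists_generalized_inverse {K V W : Type*} [Field K] [AddCommGroup V] [Module K V]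
    [AddCommGroup W] [Module K W] (g : V →ₗ[K] W) :
    ∃ h : W →ₗ[K] V, ∀ v, g (h (g v)) = g v := by
  obtain ⟨r, hr⟩ := g.rangeRestrict.exists_rightInverse_of_surjective g.range_rangeRestrict
  obtain ⟨h, hh⟩ := LinearMap.exists_extend r
  refine ⟨h, fun v => ?_⟩
  have h1 : h (g v) = r (g.rangeRestrict v) := LinearMap.congr_fun hh (g.rangeRestrict v)
  have h2 := congrArg Subtype.val (LinearMap.congr_fun hr (g.rangeRestrict v))
  rw [h1]
  simpa using h2

/-- Membership in the bounded sublattice generated by `g`: the generated sublattice with `⊤` and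
`⊥` adjoined, which accounts for empty intersections and empty sums. -/
def BddGenLat {K A ι : Type*} [Field K] [AddCommGroup A] [Module K A]
    (g : ι → Submodule K A) (X : Submodule K A) : Prop :=
  X = ⊤ ∨ X = ⊥ ∨ GenLat g X

section BddGenLat

variable {K A ι : Type*} [Field K] [AddCommGroup A] [Module K A] {g : ι → Submodule K A}
  {X Y Z : Submodule K A}

lemma BddGenLat.sup (hX : BddGenLat g X) (hY : BddGenLat g Y) : BddGenLat g (X ⊔ Y) := by
  rcases hX with rfl | rfl | hX
  · left; simp
  · simpa using hY
  · rcases hY with rfl | rfl | hY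
    · left; simp
    · right; right; simpa using hX
    · exact Or.inr (Or.inr (hX.sup hY))

lemma BddGenLat.inf (hX : BddGenLat g X) (hY : BddGenLat g Y) : BddGenLat g (X ⊓ Y) := by
  rcases hX with rfl | rfl | hX
  · simpa using hY
  · right; left; simp
  · rcases hY with rfl | rfl | hY
    · right; right; simpa using hX
    · right; left; simp
    · exact Or.inr (Or.inr (hX.inf hY))

lemma BddGenLat.distrib
    (hdist : ∀ X Y Z, GenLat g X → GenLat g Y → GenLat g Z → X ⊓ (Y ⊔ Z) = (X ⊓ Y) ⊔ (X ⊓ Z))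
    (hX : BddGenLat g X) (hY : BddGenLat g Y) (hZ : BddGenLat g Z) :
    X ⊓ (Y ⊔ Z) = (X ⊓ Y) ⊔ (X ⊓ Z) := by
  rcases hX with rfl | rfl | hX
  · simp
  · simp
  rcases hY with rfl | rfl | hY
  · simp
  · simp
  rcases hZ with rfl | rfl | hZ
  · simp
  · simp
  exact hdist X Y Z hX hY hZ

end BddGenLat

/-- For an upward closed family `𝒮` of index sets, there is a linear map which is a section of `π`
compatible with all the `f i` on the image under `π` of `∑_{S ∈ 𝒮} ⋂_{i ∈ S} f i`. An element
`π a` lies in `π (f i)` exactly when `a ∈ f i ⊔ ker π`. -/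
lemma exists_partial_section {K A B ι : Type*} [Field K] [AddCommGroup A] [Module K A]
    [AddCommGroup B] [Module K B] [DecidableEq ι]
    (π : A →ₗ[K] B) (f : ι → Submodule K A) (L : Submodule K A → Prop)
    (htop : L ⊤) (hbot : L ⊥) (hker : L (LinearMap.ker π)) (hf : ∀ i, L (f i))
    (hsup : ∀ X Y, L X → L Y → L (X ⊔ Y)) (hinf : ∀ X Y, L X → L Y → L (X ⊓ Y))
    (hdist : ∀ X Y Z, L X → L Y → L Z → X ⊓ (Y ⊔ Z) = (X ⊓ Y) ⊔ (X ⊓ Z))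
    (𝒮 : Finset (Finset ι)) (hup : ∀ S ∈ 𝒮, ∀ i, insert i S ∈ 𝒮) :
    ∃ α : B →ₗ[K] A, ∀ a ∈ 𝒮.sup (fun S => S.inf f),
      π (α (π a)) = π a ∧ ∀ i, a ∈ f i ⊔ LinearMap.ker π → α (π a) ∈ f i := by
  induction 𝒮 using Finset.strongInduction with
  | H 𝒮 ih =>
  rcases 𝒮.eq_empty_or_nonempty with rfl | hne
  · refine ⟨0, fun a ha => ?_⟩
    have ha0 : a = 0 := by simpa using ha
    simp [ha0]
  obtain ⟨S, hS⟩ := 𝒮.exists_minimal hne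
  have hSmem : S ∈ 𝒮 := hS.prop
  have hup' : ∀ T ∈ 𝒮.erase S, ∀ i, insert i T ∈ 𝒮.erase S := by
    intro T hT i
    rw [Finset.mem_erase] at hT ⊢
    refine ⟨fun h => hT.1 ?_, hup T hT.2 i⟩
    have hTS : T ≤ S := h ▸ Finset.subset_insert i T
    exact le_antisymm hTS (hS.le_of_le hT.2 hTS)
  obtain ⟨α, hα⟩ := ih _ (Finset.erase_ssubset hSmem) hup'
  set V := (𝒮.erase S).sup (fun S => S.inf f) with hV
  have hVS : 𝒮.sup (fun S => S.inf f) = S.inf f ⊔ V := by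
    rw [hV, ← Finset.sup_insert (f := fun S : Finset ι => S.inf f), Finset.insert_erase hSmem]
  have hLinf : ∀ T : Finset ι, L (T.inf f) := fun T =>
    Finset.inf_induction htop (fun X hX Y hY => hinf X Y hX hY) (fun i _ => hf i)
  have hLV : L V :=
    Finset.sup_induction hbot (fun X hX Y hY => hsup X Y hX hY) (fun T _ => hLinf T)
  -- `h` lifts `π(A_S)` to `A_S` modulo `π(V)`.
  obtain ⟨h, hh⟩ := exists_generalized_inverse
    ((V.map π).mkQ ∘ₗ π ∘ₗ (S.inf f).subtype)
  set s : B →ₗ[K] A := (S.inf f).subtype ∘ₗ h ∘ₗ (V.map π).mkQ with hs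
  have hsS : ∀ b, s b ∈ S.inf f := fun b => (h ((V.map π).mkQ b)).2
  have hsV : ∀ v ∈ V, s (π v) = 0 := by
    intro v hv
    have h0 : (V.map π).mkQ (π v) = 0 := by
      simpa using (⟨v, hv, rfl⟩ : ∃ y ∈ V, π y = π v)
    simp only [hs, LinearMap.comp_apply, h0, map_zero]
  have hsec : ∀ a ∈ S.inf f, ∃ v ∈ V, π v = π a - π (s (π a)) := by
    intro a ha
    have h1 : (V.map π).mkQ (π (s (π a))) = (V.map π).mkQ (π a) := hh ⟨a, ha⟩
    exact Submodule.mem_map.1 ((Submodule.Quotient.eq _).1 h1.symm)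
  refine ⟨α + s - α ∘ₗ π ∘ₗ s, ?_⟩
  have hγ : ∀ b, (α + s - α ∘ₗ π ∘ₗ s) b = α (b - π (s b)) + s b := by
    intro b
    simp only [LinearMap.sub_apply, LinearMap.add_apply, LinearMap.comp_apply, map_sub]
    abel
  generalize α + s - α ∘ₗ π ∘ₗ s = γ at hγ
  have hγV : ∀ v ∈ V, γ (π v) = α (π v) := by
    intro v hv
    simp [hγ, hsV v hv]
  intro a ha
  rw [hVS] at ha
  refine ⟨?_, fun i hi => ?_⟩
  · obtain ⟨x, hx, y, hy, rfl⟩ := Submodule.mem_sup.1 ha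
    obtain ⟨v, hv, hvx⟩ := hsec x hx
    have h1 : π (γ (π x)) = π x := by
      rw [hγ, ← hvx, map_add, (hα v hv).1, hvx]
      abel
    rw [map_add, map_add, map_add, h1, hγV y hy, (hα y hy).1]
  · have hsplit := hdist _ _ _ (hsup _ _ (hf i) hker) (hLinf S) hLV
    have hmem : a ∈ (f i ⊔ LinearMap.ker π) ⊓ (S.inf f ⊔ V) := ⟨hi, ha⟩
    rw [hsplit] at hmem
    obtain ⟨x, ⟨hxi, hxS⟩, y, ⟨hyi, hyV⟩, rfl⟩ := Submodule.mem_sup.1 hmem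
    rw [map_add, map_add, hγV y hyV]
    refine add_mem ?_ ((hα y hyV).2 i hyi)
    by_cases hiS : i ∈ S
    · have hle : S.inf f ≤ f i := Finset.inf_le hiS
      obtain ⟨v, hv, hvx⟩ := hsec x hxS
      rw [hγ, ← hvx]
      refine add_mem ((hα v hv).2 i ?_) (hle (hsS _))
      -- `v` agrees with `x - s (π x) ∈ A_S ⊆ A_i` modulo `ker π`.
      refine Submodule.mem_sup.2 ⟨x - s (π x), hle (sub_mem hxS (hsS _)),
        v - (x - s (π x)), ?_, by abel⟩
      simp [hvx]
    · have hx : x ∈ S.inf f ⊓ (f i ⊔ LinearMap.ker π) := ⟨hxS, hxi⟩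
      rw [hdist _ _ _ (hLinf S) (hf i) hker] at hx
      obtain ⟨z, ⟨hzS, hzi⟩, n, ⟨-, hn⟩, rfl⟩ := Submodule.mem_sup.1 hx
      have hins : insert i S ∈ 𝒮.erase S :=
        Finset.mem_erase.2 ⟨fun h => hiS (Finset.insert_eq_self.1 h), hup S hSmem i⟩
      have hzV : z ∈ V := by
        have hle : (insert i S).inf f ≤ V :=
          Finset.le_sup (f := fun S : Finset ι => S.inf f) hins
        apply hle
        rw [Finset.inf_insert]
        exact ⟨hzi, hzS⟩
      rw [map_add, LinearMap.mem_ker.1 hn, add_zero, hγV z hzV]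
      exact (hα z hzV).2 i (Submodule.mem_sup_left hzi)

/-- Let `π : A → B` be a surjective linear map of vector spaces and
`{A_i}_{i∈I}` a finite family of subspaces such that `{A_i} ∪ {ker π}` generates a distributive
lattice of subspaces.  Then there is a linear splitting `α : B → A` of `π` with
`α(π(A_i)) ⊆ A_i` for all `i`. -/
theorem stmt_6 {K A B ι : Type*} [Field K] [AddCommGroup A] [Module K A]
    [AddCommGroup B] [Module K B] [Fintype ι]
    (π : A →ₗ[K] B) (hsurj : Function.Surjective π)
    (f : ι → Submodule K A)
    (hdist : ∀ X Y Z : Submodule K A,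
      GenLat (fun o : Option ι => Option.elim o (LinearMap.ker π) f) X →
      GenLat (fun o : Option ι => Option.elim o (LinearMap.ker π) f) Y →
      GenLat (fun o : Option ι => Option.elim o (LinearMap.ker π) f) Z →
      X ⊓ (Y ⊔ Z) = (X ⊓ Y) ⊔ (X ⊓ Z)) :
    ∃ α : B →ₗ[K] A, π ∘ₗ α = LinearMap.id ∧
      ∀ i : ι, ∀ b ∈ Submodule.map π (f i), α b ∈ f i := by
  classical
  obtain ⟨α, hα⟩ := exists_partial_section π f
    (BddGenLat (fun o : Option ι => Option.elim o (LinearMap.ker π) f))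
    (Or.inl rfl) (Or.inr (Or.inl rfl)) (Or.inr (Or.inr (GenLat.base none)))
    (fun i => Or.inr (Or.inr (GenLat.base (some i))))
    (fun _ _ => BddGenLat.sup) (fun _ _ => BddGenLat.inf)
    (fun _ _ _ => BddGenLat.distrib hdist)
    Finset.univ (fun _ _ _ => Finset.mem_univ _)
  -- The empty index set contributes the whole space.
  have htop : ∀ a, a ∈ (Finset.univ : Finset (Finset ι)).sup (fun S => S.inf f) := by
    intro a
    have hle : (∅ : Finset ι).inf f ≤ (Finset.univ : Finset (Finset ι)).sup (fun S => S.inf f) :=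
      Finset.le_sup (f := fun S : Finset ι => S.inf f) (Finset.mem_univ _)
    exact hle (by simp)
  refine ⟨α, ?_, ?_⟩
  · ext b
    obtain ⟨a, rfl⟩ := hsurj b
    exact (hα a (htop a)).1
  · rintro i _ ⟨a, ha, rfl⟩
    exact (hα a (htop a)).2 i (Submodule.mem_sup_left ha)
end

section
/- Let V be the complex vector space of finitely supported sequences ℕ → ℂ with standard basis (e_m)_{m∈ℕ}, let S : V → V be the right shift (S e_m = e_{m+1}) and S* : V → V the left shift (S* e_0 = 0, S* e_{m+1} = e_m). For n ∈ ℕ define E_n := S ∘ (Sⁿ ∘ (S*)ⁿ − S^{n+2} ∘ (S*)^{n+2}). Then for all m, n ∈ ℕ, E_n²(e_m) = e_{n+2} if m = n and E_n²(e_m) = 0 otherwise. Consequently, if T : V → V is a linear map with E_n² ∘ T = 0 for every n ∈ ℕ, then T = 0. -/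
/-!
`Sⁿ (S*)ⁿ` fixes `e_m` for `n ≤ m` and kills it otherwise, so `E_n` sends `e_n ↦ e_{n+1}`,
`e_{n+1} ↦ e_{n+2}` and kills every other basis vector. Hence `E_n²` is the rank-one map
`v ↦ v(n) • e_{n+2}`, and `E_n² ∘ T = 0` for all `n` says that every coordinate of every
`T v` vanishes.
-/

theorem pow_shift_single (S : (ℕ →₀ ℂ) →ₗ[ℂ] (ℕ →₀ ℂ))
    (hS : ∀ m : ℕ, S (Finsupp.single m 1) = Finsupp.single (m + 1) 1) (n m : ℕ) :
    (S ^ n) (Finsupp.single m 1) = Finsupp.single (m + n) 1 := by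
  induction n with
  | zero => simp
  | succ n ih => rw [pow_succ', Module.End.mul_apply, ih, hS, add_assoc]

theorem pow_unshift_single (Sstar : (ℕ →₀ ℂ) →ₗ[ℂ] (ℕ →₀ ℂ))
    (hSstar0 : Sstar (Finsupp.single 0 1) = 0)
    (hSstarS : ∀ m : ℕ, Sstar (Finsupp.single (m + 1) 1) = Finsupp.single m 1) (n m : ℕ) :
    (Sstar ^ n) (Finsupp.single m 1) = if n ≤ m then Finsupp.single (m - n) 1 else 0 := by
  induction n generalizing m with
  | zero => simp
  | succ n ih =>
    rw [pow_succ, Module.End.mul_apply]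
    cases m with
    | zero => simp [hSstar0]
    | succ m => simp [hSstarS, ih]

/-- On the space `V = ℕ →₀ ℂ` of finitely supported sequences with standard
basis `e_m`, let `S` be the right shift and `S*` the left shift, and set
`E_n := S ∘ (Sⁿ ∘ (S*)ⁿ − S^{n+2} ∘ (S*)^{n+2})`.  Then `E_n²(e_m) = e_{n+2}` if `m = n` and
`0` otherwise; consequently any linear `T : V → V` with `E_n² ∘ T = 0` for all `n` is zero. -/
theorem stmt_10 (S Sstar : (ℕ →₀ ℂ) →ₗ[ℂ] (ℕ →₀ ℂ))
    (hS : ∀ m : ℕ, S (Finsupp.single m 1) = Finsupp.single (m + 1) 1)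
    (hSstar0 : Sstar (Finsupp.single 0 1) = 0)
    (hSstarS : ∀ m : ℕ, Sstar (Finsupp.single (m + 1) 1) = Finsupp.single m 1)
    (E : ℕ → ((ℕ →₀ ℂ) →ₗ[ℂ] (ℕ →₀ ℂ)))
    (hE : ∀ n : ℕ, E n = S ∘ₗ ((S ^ n) ∘ₗ (Sstar ^ n) - (S ^ (n + 2)) ∘ₗ (Sstar ^ (n + 2)))) :
    (∀ m n : ℕ, (E n ∘ₗ E n) (Finsupp.single m 1) =
      if m = n then Finsupp.single (n + 2) (1 : ℂ) else 0) ∧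
    (∀ T : (ℕ →₀ ℂ) →ₗ[ℂ] (ℕ →₀ ℂ), (∀ n : ℕ, (E n ∘ₗ E n) ∘ₗ T = 0) → T = 0) := by
  have proj (n m : ℕ) : (S ^ n) ((Sstar ^ n) (Finsupp.single m 1)) =
      if n ≤ m then Finsupp.single m (1 : ℂ) else 0 := by
    rw [pow_unshift_single Sstar hSstar0 hSstarS]
    split_ifs with h
    · rw [pow_shift_single S hS, Nat.sub_add_cancel h]
    · exact map_zero _
  have step (n m : ℕ) : E n (Finsupp.single m 1) =
      if m = n ∨ m = n + 1 then Finsupp.single (m + 1) (1 : ℂ) else 0 := by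
    rw [hE, LinearMap.comp_apply, LinearMap.sub_apply, LinearMap.comp_apply,
      LinearMap.comp_apply, proj, proj]
    by_cases h₁ : n ≤ m <;> by_cases h₂ : n + 2 ≤ m
    · rw [if_pos h₁, if_pos h₂, if_neg (by omega), sub_self, map_zero]
    · rw [if_pos h₁, if_neg h₂, if_pos (by omega), sub_zero, hS]
    · omega
    · rw [if_neg h₁, if_neg h₂, if_neg (by omega), sub_self, map_zero]
  have sq (m n : ℕ) : (E n ∘ₗ E n) (Finsupp.single m 1) =
      if m = n then Finsupp.single (n + 2) (1 : ℂ) else 0 := by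
    rw [LinearMap.comp_apply, step]
    by_cases h : m = n
    · subst h
      simp [step]
    · rw [if_neg h]
      split_ifs
      · rw [step, if_neg (by omega)]
      · exact map_zero _
  refine ⟨sq, fun T hT => ?_⟩
  have rank_one (n : ℕ) : E n ∘ₗ E n = Finsupp.lsingle (n + 2) ∘ₗ Finsupp.lapply n := by
    refine Finsupp.lhom_ext' fun m => LinearMap.ext_ring ?_
    rw [LinearMap.comp_apply, Finsupp.lsingle_apply, sq]
    by_cases h : m = n <;> simp [h]
  ext1 m
  ext n
  have h := LinearMap.congr_fun (hT n) (Finsupp.single m 1)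
  rw [rank_one] at h
  simpa using h
end
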